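/- Let a < b be reals and f, g : [a,b] → ℝ be Lipschitz with f strictly decreasing and g non-decreasing. Then h : [a,b] → ℝ defined by h(s) := min{f(s), g(s)} is Lipschitz; moreover, if F ⊂ ℝ is such that f'(s) ∈ F for almost every s ∈ [a,b], and G ⊂ ℝ is such that g'(s) ∈ G for almost every s ∈ [a,b], then h'(s) ∈ F ∪ G for almost every s ∈ [a,b]. -/

import Mathlib

open MeasureTheory

/-!
A minimum of two Lipschitz functions is Lipschitz because `min` is 1-Lipschitz for the sup norm.
For the derivatives: a strictly decreasing and a non-decreasing function agree in at most one
point of `[a,b]`. At every other point, continuity gives a strict inequality between `f` and `g`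
on a relative neighbourhood, where the minimum is one of the two functions, so its derivative
there is that of `f` or of `g`.
-/

/-- Proposition 3 (decreasing case): if `f, g : [a,b] → ℝ` are Lipschitz, `f` is strictly
decreasing and `g` is non-decreasing, then `h := min{f,g}` is Lipschitz on `[a,b]`;
moreover, if `f'(s) ∈ F` for a.e. `s ∈ [a,b]` and `g'(s) ∈ G` for a.e. `s ∈ [a,b]`,
then `h'(s) ∈ F ∪ G` for a.e. `s ∈ [a,b]`. -/
theorem min_lipschitz_deriv_mem_union_anti
    (a b : ℝ) (hab : a < b) (f g : ℝ → ℝ) (F G : Set ℝ)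
    (hf : ∃ K : NNReal, LipschitzOnWith K f (Set.Icc a b))
    (hg : ∃ K : NNReal, LipschitzOnWith K g (Set.Icc a b))
    (hfm : StrictAntiOn f (Set.Icc a b))
    (hgm : MonotoneOn g (Set.Icc a b))
    (hF : ∀ᵐ s ∂(volume.restrict (Set.Icc a b)),
      derivWithin f (Set.Icc a b) s ∈ F)
    (hG : ∀ᵐ s ∂(volume.restrict (Set.Icc a b)),
      derivWithin g (Set.Icc a b) s ∈ G) :
    (∃ K : NNReal, LipschitzOnWith K (fun s => min (f s) (g s)) (Set.Icc a b)) ∧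
    (∀ᵐ s ∂(volume.restrict (Set.Icc a b)),
      derivWithin (fun s => min (f s) (g s)) (Set.Icc a b) s ∈ F ∪ G) := by
  obtain ⟨K, hK⟩ := hf
  obtain ⟨L, hL⟩ := hg
  refine ⟨⟨max K L, LipschitzOnWith.of_dist_le_mul fun s hs t ht => ?_⟩, ?_⟩
  · have h1 := hK.dist_le_mul s hs t ht
    have h2 := hL.dist_le_mul s hs t ht
    have h3 := abs_min_sub_min_le_max (f s) (g s) (f t) (g t)
    rw [Real.dist_eq] at h1 h2 ⊢
    refine h3.trans (max_le (h1.trans ?_) (h2.trans ?_))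
    · gcongr
      exact le_max_left K L
    · gcongr
      exact le_max_right K L
  · have hsub : {s | s ∈ Set.Icc a b ∧ f s = g s}.Subsingleton := by
      intro s hs t ht
      rcases lt_trichotomy s t with hst | hst | hst
      · linarith [hfm hs.1 ht.1 hst, hgm hs.1 ht.1 hst.le, hs.2, ht.2]
      · exact hst
      · linarith [hfm ht.1 hs.1 hst, hgm ht.1 hs.1 hst.le, hs.2, ht.2]
    have hne : ∀ᵐ s ∂(volume.restrict (Set.Icc a b)),
        s ∉ {s | s ∈ Set.Icc a b ∧ f s = g s} :=
      ae_restrict_of_ae (measure_eq_zero_iff_ae_notMem.mp (hsub.measure_zero volume))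
    filter_upwards [hF, hG, hne, ae_restrict_mem measurableSet_Icc] with s hsF hsG hs hmem
    have hcf := hK.continuousOn s hmem
    have hcg := hL.continuousOn s hmem
    rcases lt_trichotomy (f s) (g s) with hlt | heq | hlt
    · left
      have hev : (fun s => min (f s) (g s)) =ᶠ[nhdsWithin s (Set.Icc a b)] f := by
        filter_upwards [hcf.eventually_lt hcg hlt] with t ht using min_eq_left ht.le
      rwa [hev.derivWithin_eq (min_eq_left hlt.le)]
    · exact absurd ⟨hmem, heq⟩ hs
    · right
      have hev : (fun s => min (f s) (g s)) =ᶠ[nhdsWithin s (Set.Icc a b)] g := by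
        filter_upwards [hcg.eventually_lt hcf hlt] with t ht using min_eq_right ht.le
      rwa [hev.derivWithin_eq (min_eq_right hlt.le)]
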